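/- Let φ(X) = X² + X ∈ ℚ[X]. Then for every n ≥ 1, the splitting field K_n of the n-fold iterate φ^{∘n} over ℚ satisfies [K_n : ℚ] = 2^(2^(n−1) − 1); in other words, the Galois group of φ^{∘n} over ℚ has the maximal possible order 2^(2^(n−1)−1), equal to the order of the automorphism group of the complete binary tree of height n−1. -/

import Mathlib

open Polynomial

/-- The `n`-fold iterate (composition) of a polynomial, with `iterComp p 0 = X`. -/
noncomputable def iterComp (p : ℚ[X]) : ℕ → ℚ[X]
  | 0 => X
  | n + 1 => p.comp (iterComp p n)

/-- The splitting field of a rational polynomial inside a fixed algebraic closure of `ℚ`: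
the intermediate field generated by its set of roots. -/
noncomputable def splitFld (p : ℚ[X]) : IntermediateField ℚ (AlgebraicClosure ℚ) :=
  IntermediateField.adjoin ℚ (p.rootSet (AlgebraicClosure ℚ))


namespace Stmt19

/-- The map `x ↦ x² + x`. -/
def ph {R : Type*} [CommRing R] (x : R) : R := x ^ 2 + x

/-- Scaled critical orbit. -/
def A : ℕ → ℤ
  | 0 => -1
  | j + 1 => A j ^ 2 + A j * 4 ^ (2 ^ j)

/-- Scaled shifted critical orbit. -/
def D (j : ℕ) : ℤ := A j + 4 ^ (2 ^ j)

lemma A_cast {F : Type*} [Field F] (h4 : (4 : F) ≠ 0) (j : ℕ) :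
    (A j : F) = 4 ^ (2 ^ j) * ph^[j] (-1 / 4) := by
  induction j with
  | zero => simp [A]; field_simp
  | succ j ih =>
    rw [Function.iterate_succ_apply', A]
    push_cast
    rw [ih, ph]
    ring

lemma D_cast {F : Type*} [Field F] (h4 : (4 : F) ≠ 0) (j : ℕ) :
    (D j : F) = 4 ^ (2 ^ j) * (ph^[j] (-1 / 4) + 1) := by
  rw [D]; push_cast; rw [A_cast h4]; ring

lemma D_zero_iff {F : Type*} [Field F] (h4 : (4 : F) ≠ 0) (j : ℕ) :
    (D j : F) = 0 ↔ ph^[j] (-1 / 4 : F) = -1 := by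
  rw [D_cast h4, mul_eq_zero, or_iff_right (pow_ne_zero _ h4), add_eq_zero_iff_eq_neg]

lemma ph_iter_zero {R : Type*} [CommRing R] (j : ℕ) : ph^[j] (0 : R) = 0 := by
  apply Function.iterate_fixed; simp [ph]

lemma D_coprime {F : Type*} [Field F] (h4 : (4 : F) ≠ 0) {i j : ℕ} (hij : i < j)
    (hj : (D j : F) = 0) : (D i : F) ≠ 0 := by
  intro hi
  rw [D_zero_iff h4] at hi hj
  obtain ⟨m, rfl⟩ := Nat.exists_eq_add_of_lt hij
  rw [show i + m + 1 = m + (1 + i) by ring, Function.iterate_add_apply,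
    Function.iterate_add_apply, hi] at hj
  have : ph^[1] (-1 : F) = 0 := by simp [ph]
  rw [this, ph_iter_zero] at hj
  exact one_ne_zero (neg_eq_zero.mp hj.symm)

lemma D_odd (j : ℕ) : Odd (D j) := by
  have hA : ∀ j, Odd (A j) := by
    intro j
    induction j with
    | zero => simp [A]
    | succ j ih =>
      rw [A]
      refine ih.pow.add_even (Even.mul_left ?_ _)
      exact Even.pow_of_ne_zero (by decide) (by positivity)
  exact (hA j).add_even (Even.pow_of_ne_zero (by decide) (by positivity))

lemma D_mod5 (j : ℕ) : (D j : ZMod 5) = 2 ∨ (D j : ZMod 5) = 3 := by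
  have h4 : ∀ j, (4 : ZMod 5) ^ (2 ^ (j + 1)) = 1 := by
    intro j
    rw [pow_succ', pow_mul]
    rw [show (4 : ZMod 5) ^ 2 = 1 by decide, one_pow]
  have hA : ∀ j, (A (j + 1) : ZMod 5) = 1 ∨ (A (j + 1) : ZMod 5) = 2 := by
    intro j
    induction j with
    | zero => right; simp [A]; try decide
    | succ j ih =>
      rw [A]; push_cast; rw [h4]
      rcases ih with h | h <;> rw [h] <;> decide
  cases j with
  | zero => right; simp [D, A]; try decide
  | succ j =>
    rw [D]; push_cast; rw [h4]
    rcases hA j with h | h <;> rw [h] <;> decide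

lemma exists_prime (j : ℕ) : ∃ (p m : ℕ) (u : ℤ), p.Prime ∧ p ≠ 2 ∧ Odd m ∧ ¬ (p : ℤ) ∣ u ∧
    D j = p ^ m * u := by
  have h0 : (D j).natAbs ≠ 0 := by
    intro h
    have := D_odd j
    rw [Int.natAbs_eq_zero.mp h] at this
    simp at this
  have hex : ∃ p, Odd ((D j).natAbs.factorization p) := by
    by_contra! hc
    simp only [Nat.not_odd_iff_even] at hc
    have hsq : IsSquare ((D j).natAbs) := by
      rw [← Nat.prod_factorization_pow_eq_self h0]
      rw [Finsupp.prod]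
      apply Finset.isSquare_prod
      intro p _
      exact (hc p).isSquare_pow p
    obtain ⟨s, hs⟩ := hsq
    have : (D j : ZMod 5) = (s : ZMod 5) * s ∨ (D j : ZMod 5) = - ((s : ZMod 5) * s) := by
      rcases Int.natAbs_eq (D j) with h | h
      · left; rw [h, hs]; push_cast; rfl
      · right; rw [h, hs]; push_cast; rfl
    generalize (s : ZMod 5) = t at this
    rcases D_mod5 j with h | h <;> rw [h] at this <;> revert t <;> decide
  obtain ⟨p, hp⟩ := hex
  have hpp : p.Prime := by
    by_contra h
    rw [Nat.factorization_eq_zero_of_not_prime _ h] at hp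
    simp at hp
  set m := (D j).natAbs.factorization p with hm
  have hdvd : (p : ℤ) ^ m ∣ D j := by
    rw [← Int.natCast_pow, Int.natCast_dvd]
    exact Nat.ordProj_dvd _ _
  obtain ⟨u, hu⟩ := hdvd
  refine ⟨p, m, u, hpp, ?_, hp, ?_, hu⟩
  · rintro rfl
    have : (2 : ℤ) ∣ D j := by
      rw [hu]
      exact Dvd.dvd.mul_right (by exact_mod_cast dvd_pow_self (2 : ℤ) hp.pos.ne') _
    have h2 := D_odd j
    rw [← Int.not_even_iff_odd] at h2
    exact h2 (even_iff_two_dvd.mpr this)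
  · intro hd
    have : (p : ℤ) ^ (m + 1) ∣ D j := by
      rw [hu, pow_succ]; exact mul_dvd_mul_left _ hd
    rw [← Int.natCast_pow, Int.natCast_dvd] at this
    exact Nat.pow_succ_factorization_not_dvd h0 hpp this

/-- The polynomial `φ^{∘n} + 1`. -/
noncomputable def psi (R : Type*) [CommRing R] : ℕ → R[X]
  | 0 => X + 1
  | n + 1 => (psi R n).comp (X ^ 2 + X)

lemma psi_eval {R : Type*} [CommRing R] (n : ℕ) (x : R) :
    (psi R n).eval x = ph^[n] x + 1 := by
  induction n generalizing x with
  | zero => simp [psi]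
  | succ n ih => simp [psi, ih, eval_comp, ph]

lemma psi_map {R S : Type*} [CommRing R] [CommRing S] (f : R →+* S) (n : ℕ) :
    (psi R n).map f = psi S n := by
  induction n with
  | zero => simp [psi]
  | succ n ih => simp [psi, ih, Polynomial.map_comp]

lemma map_ph_iter {R S : Type*} [CommRing R] [CommRing S] (f : R →+* S) (n : ℕ) (x : R) :
    f (ph^[n] x) = ph^[n] (f x) := by
  induction n generalizing x with
  | zero => rfl
  | succ n ih => rw [Function.iterate_succ_apply, Function.iterate_succ_apply, ih]; simp [ph]

section witt
variable (p : ℕ) [hp : Fact p.Prime] {k : Type*} [Field k] [CharP k p] [PerfectRing k p]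

lemma witt_root [IsAlgClosed k] (w : WittVector p k)
    (hw : (1 + 4 * WittVector.constantCoeff w) ≠ 0) :
    ∃ a : WittVector p k, a ^ 2 + a = w := by
  obtain ⟨a0, ha0⟩ := IsAlgClosed.exists_root (X ^ 2 + X - C (WittVector.constantCoeff w) : k[X])
    (by
      have : (X ^ 2 + X - C (WittVector.constantCoeff w) : k[X]).degree = 2 := by compute_degree!
      rw [this]; decide)
  obtain ⟨b, hb⟩ : ∃ b : WittVector p k, WittVector.constantCoeff b = a0 :=
    ⟨WittVector.teichmuller p a0, by simp [WittVector.constantCoeff, WittVector.teichmuller_coeff_zero]⟩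
  have hroot : a0 ^ 2 + a0 = WittVector.constantCoeff w := by
    have := ha0
    simp [IsRoot, -WittVector.constantCoeff_apply] at this
    linear_combination this
  have H := HenselianRing.is_henselian (R := WittVector p k) (I := Ideal.span {(p : WittVector p k)})
    (X ^ 2 + X - C w) (by monicity!) b
    (by
      rw [WittVector.mem_span_p_iff_coeff_zero_eq_zero]
      change WittVector.constantCoeff _ = 0
      simp [hb, hroot, -WittVector.constantCoeff_apply])
    (by
      apply IsUnit.map
      apply WittVector.isUnit_of_coeff_zero_ne_zero
      change WittVector.constantCoeff _ ≠ 0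
      simp only [derivative_sub, derivative_add, derivative_X_pow, derivative_X, derivative_C]
      simp [hb, -WittVector.constantCoeff_apply]
      intro h
      have h2 : WittVector.constantCoeff (2 : WittVector p k) = 2 := map_ofNat _ 2
      rw [h2] at h
      apply hw
      rw [← hroot]
      linear_combination (2 * a0 + 1) * h)
  obtain ⟨a, ha, -⟩ := H
  refine ⟨a, ?_⟩
  simp [IsRoot] at ha
  linear_combination ha

lemma four_ne (hp2 : p ≠ 2) : (4 : k) ≠ 0 := by
  intro h
  have h' : ((4 : ℕ) : k) = 0 := by exact_mod_cast h
  rw [CharP.cast_eq_zero_iff _ p] at h'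
  have : p ∣ 2 := hp.out.dvd_of_dvd_pow (show p ∣ 2 ^ 2 by simpa using h')
  exact hp2 ((Nat.prime_dvd_prime_iff_eq hp.out Nat.prime_two).mp this)

lemma witt_split [IsAlgClosed k] (hp2 : p ≠ 2) (n : ℕ)
    (hD : ∀ j < n, (D j : k) ≠ 0) :
    (psi (WittVector p k) n).Splits := by
  have h4 := four_ne (k := k) p hp2
  induction n with
  | zero => simpa [psi] using Splits.X_add_C (1 : WittVector p k)
  | succ n ih =>
    have hs := ih (fun j hj => hD j (by omega))
    rw [splits_iff_exists_multiset] at hs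
    have hmon : (psi (WittVector p k) n).leadingCoeff = 1 := by
      clear hs ih hD
      suffices h : (psi (WittVector p k) n).Monic from h
      induction n with
      | zero => simpa [psi] using monic_X_add_C (1 : WittVector p k)
      | succ n ih =>
        rw [psi]
        refine ih.comp (by monicity!) ?_
        have : (X ^ 2 + X : (WittVector p k)[X]).natDegree = 2 := by compute_degree!
        rw [this]; decide
    obtain ⟨m, hm⟩ := hs
    rw [hmon, C_1, one_mul] at hm
    have : ∀ w ∈ m, ((X ^ 2 + X - C w : (WittVector p k)[X])).Splits := by
      intro w hw
      have hroot : ph^[n] w = -1 := by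
        have := psi_eval n w
        rw [hm, eval_multiset_prod] at this
        rw [eq_neg_iff_add_eq_zero, ← this]
        apply Multiset.prod_eq_zero
        simp only [Multiset.map_map, Multiset.mem_map]
        exact ⟨w, hw, by simp⟩
      obtain ⟨a, ha⟩ := witt_root p w (by
        intro h
        apply hD n (by omega)
        rw [D_zero_iff h4]
        have : (-1 / 4 : k) = WittVector.constantCoeff w := by
          rw [div_eq_iff h4]
          linear_combination -h
        rw [this, ← map_ph_iter, hroot]
        simp [-WittVector.constantCoeff_apply])
      have : (X ^ 2 + X - C w : (WittVector p k)[X]) = (X - C a) * (X + C (a + 1)) := by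
        rw [← ha]; simp; ring
      rw [this]
      exact (Splits.X_sub_C _).mul (Splits.X_add_C _)
    rw [psi, hm, multiset_prod_comp]
    apply Splits.multisetProd
    simp only [Multiset.map_map, Multiset.mem_map]
    rintro f ⟨w, hw, rfl⟩
    simpa using this w hw

lemma witt_nonsq (m : ℕ) (hm : Odd m) (u : ℤ) (hu : ¬ (p : ℤ) ∣ u)
    (t : FractionRing (WittVector p k)) :
    t ^ 2 ≠ ((p ^ m * u : ℤ) : FractionRing (WittVector p k)) := by
  intro ht
  have hint : IsIntegral (WittVector p k) t := by
    refine IsIntegral.of_pow (n := 2) (by norm_num) ?_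
    rw [ht]
    have := isIntegral_algebraMap (R := WittVector p k) (A := FractionRing (WittVector p k))
      (x := ((p ^ m * u : ℤ) : WittVector p k))
    rwa [map_intCast] at this
  obtain ⟨s, rfl⟩ := IsIntegrallyClosed.isIntegral_iff.mp hint
  have hs : s ^ 2 = (p : WittVector p k) ^ m * u := by
    apply IsFractionRing.injective (WittVector p k) (FractionRing (WittVector p k))
    rw [map_pow, ht]
    rw [map_mul, map_pow, map_natCast, map_intCast]
    push_cast
    rfl
  have hpp : Prime (p : WittVector p k) := (WittVector.irreducible p).prime
  have hud : ¬ (p : WittVector p k) ∣ (u : WittVector p k) := by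
    rw [← Ideal.mem_span_singleton, WittVector.mem_span_p_iff_coeff_zero_eq_zero]
    change ¬ WittVector.constantCoeff _ = 0
    rw [map_intCast, CharP.intCast_eq_zero_iff k p]
    exact hu
  have h1 := emultiplicity_pow hpp (a := s) (k := 2)
  rw [hs, emultiplicity_mul hpp, emultiplicity_eq_zero.mpr hud, emultiplicity_pow hpp, 
    (FiniteMultiplicity.of_prime_left hpp hpp.ne_zero).emultiplicity_self] at h1
  obtain ⟨c, hc⟩ := hm
  cases h : emultiplicity (p : WittVector p k) s with
  | top =>
    rw [h] at h1
    simp at h1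
  | coe e =>
    rw [h] at h1
    have : m = 2 * e := by
      simp at h1
      exact_mod_cast h1
    omega

end witt

section fixedpt
open Classical in
/-- Fixed point argument for a `2`-group acting on square classes. -/
lemma fixed_full {F G : Type*} [Field F] [Group G] [MulSemiringAction G F] (hG : IsPGroup 2 G)
    (R : Finset F) (hstab : ∀ (g : G), ∀ x ∈ R, g • x ∈ R)
    (htrans : ∀ x ∈ R, ∀ y ∈ R, ∃ g : G, g • x = y)
    (c : F → F) (hc : ∀ (g : G) x, c (g • x) = g • c x) (hc0 : ∀ x ∈ R, c x ≠ 0)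
    (S : Finset F) (hSR : S ⊆ R) (hS : S.Nonempty) (hsq : IsSquare (∏ x ∈ S, c x)) :
    IsSquare (∏ x ∈ R, c x) := by
  let α := {S : Finset F // S ⊆ R ∧ IsSquare (∏ x ∈ S, c x)}
  have hmem : ∀ (g : G) (S : Finset F), (S ⊆ R ∧ IsSquare (∏ x ∈ S, c x)) →
      (S.image (g • ·) ⊆ R ∧ IsSquare (∏ x ∈ S.image (g • ·), c x)) := by
    rintro g S ⟨h1, ⟨t, ht⟩⟩
    refine ⟨?_, ⟨g • t, ?_⟩⟩
    · intro y hy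
      obtain ⟨x, hx, rfl⟩ := Finset.mem_image.mp hy
      exact hstab g x (h1 hx)
    · rw [Finset.prod_image (fun x _ y _ h => MulAction.injective g h), ← smul_mul', ← ht,
        Finset.smul_prod']
      exact Finset.prod_congr rfl (fun x _ => hc g x)
  let _ : MulAction G α :=
    { smul := fun g S => ⟨S.1.image (g • ·), hmem g S.1 S.2⟩
      one_smul := fun S => Subtype.ext (by
        change S.1.image ((1 : G) • ·) = S.1
        simp)
      mul_smul := fun g h S => Subtype.ext (by
        change S.1.image ((g * h) • ·) = (S.1.image (h • ·)).image (g • ·)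
        rw [Finset.image_image]
        congr 1
        funext x
        exact mul_smul g h x) }
  have hfin : Finite α := by
    refine Finite.of_injective (β := {S // S ∈ R.powerset})
      (fun S => ⟨S.1, Finset.mem_powerset.mpr S.2.1⟩) ?_
    intro a b h
    exact Subtype.ext (by simpa using h)
  have hsd : ∀ A B : Finset F, A ⊆ R → B ⊆ R → IsSquare (∏ x ∈ A, c x) →
      IsSquare (∏ x ∈ B, c x) → IsSquare (∏ x ∈ symmDiff A B, c x) := by
    rintro A B hA hB ⟨a, ha⟩ ⟨b, hb⟩
    have h1 : (∏ x ∈ A, c x) = (∏ x ∈ A \ B, c x) * ∏ x ∈ A ∩ B, c x := by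
      rw [mul_comm, Finset.prod_inter_mul_prod_sdiff]
    have h2 : (∏ x ∈ B, c x) = (∏ x ∈ B \ A, c x) * ∏ x ∈ A ∩ B, c x := by
      rw [mul_comm, Finset.inter_comm, Finset.prod_inter_mul_prod_sdiff]
    have h3 : (∏ x ∈ symmDiff A B, c x) = (∏ x ∈ A \ B, c x) * ∏ x ∈ B \ A, c x := by
      rw [symmDiff_def, Finset.sup_eq_union, Finset.prod_union]
      exact disjoint_sdiff_sdiff
    have h4 : (∏ x ∈ A ∩ B, c x) ≠ 0 :=
      Finset.prod_ne_zero_iff.mpr fun x hx => hc0 x (hA (Finset.mem_inter.mp hx).1)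
    refine ⟨a * b / ∏ x ∈ A ∩ B, c x, ?_⟩
    rw [h3]
    field_simp
    rw [ha] at h1
    rw [hb] at h2
    linear_combination (-b ^ 2) * h1 - ((∏ x ∈ A \ B, c x) * ∏ x ∈ A ∩ B, c x) * h2
  have hsub : ∀ A B : Finset F, A ⊆ R → B ⊆ R → symmDiff A B ⊆ R := by
    intro A B hA hB x hx
    rcases Finset.mem_symmDiff.mp hx with h | h
    · exact hA h.1
    · exact hB h.1
  let f : Function.End α := fun T =>
    ⟨symmDiff T.1 S, hsub _ _ T.2.1 hSR, hsd _ _ T.2.1 hSR T.2.2 hsq⟩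
  have heven : 2 ∣ Nat.card α := by
    let _ := Fintype.ofFinite α
    have h := Equiv.Perm.card_fixedPoints_modEq (f := f) (p := 2) (n := 1) (by
      funext T
      refine Subtype.ext ?_
      change symmDiff (symmDiff T.1 S) S = T.1
      simp)
    have h0 : Fintype.card (Function.fixedPoints f) = 0 := by
      rw [Fintype.card_eq_zero_iff]
      refine ⟨fun T => ?_⟩
      have : symmDiff T.1.1 S = T.1.1 := congrArg Subtype.val T.2
      rw [symmDiff_eq_left] at this
      exact hS.ne_empty this
    rw [h0] at h
    rw [Nat.card_eq_fintype_card]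
    exact (Nat.modEq_zero_iff_dvd).mp h
  have : Fact (Nat.Prime 2) := ⟨Nat.prime_two⟩
  let e : α := ⟨∅, Finset.empty_subset _, by simp⟩
  obtain ⟨b, hb, hne⟩ := hG.exists_fixed_point_of_prime_dvd_card_of_fixed_point α heven (a := e)
    (by intro g; exact Subtype.ext (by change (∅ : Finset F).image _ = ∅; simp))
  have hbne : b.1.Nonempty := by
    rw [Finset.nonempty_iff_ne_empty]
    intro h
    exact hne (Subtype.ext h.symm)
  obtain ⟨x, hx⟩ := hbne
  have : b.1 = R := by
    refine Finset.Subset.antisymm b.2.1 ?_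
    intro y hy
    obtain ⟨g, rfl⟩ := htrans x (b.2.1 hx) y hy
    have hg : b.1.image (g • ·) = b.1 := congrArg Subtype.val (hb g)
    rw [← hg]
    exact Finset.mem_image_of_mem _ hx
  rw [← this]
  exact b.2.2

end fixedpt

/-- The fixed algebraic closure. -/
abbrev Om := AlgebraicClosure ℚ

instance : Algebra.IsAlgebraic ℚ Om := by
  have e : (DivisionRing.toRatAlgebra : Algebra ℚ Om) = AlgebraicClosure.instAlgebra ℚ :=
    Subsingleton.elim _ _
  rw [e]
  exact AlgebraicClosure.isAlgebraic ℚ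

open Classical in
/-- Roots of `φ^{∘k} + 1`. -/
noncomputable def R (k : ℕ) : Finset Om := (psi Om k).roots.toFinset

lemma psi_ne {S : Type*} [CommRing S] [Nontrivial S] (k : ℕ) : psi S k ≠ 0 := by
  intro h
  have := psi_eval k (0 : S)
  rw [h, ph_iter_zero] at this
  simp at this

lemma mem_R {k : ℕ} {x : Om} : x ∈ R k ↔ ph^[k] x = -1 := by
  classical
  rw [R, Multiset.mem_toFinset, mem_roots (psi_ne k), IsRoot, psi_eval, eq_neg_iff_add_eq_zero]

lemma mem_R_succ {k : ℕ} {x : Om} : x ∈ R (k + 1) ↔ ph x ∈ R k := by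
  simp [mem_R]

lemma one_add_ne {k : ℕ} {x : Om} (hx : x ∈ R k) : 1 + 4 * x ≠ 0 := by
  intro h
  have hx' : x = -1 / 4 := by
    field_simp
    linear_combination h
  rw [mem_R, hx', ← D_zero_iff (by norm_num)] at hx
  have h0 : D k = 0 := by exact_mod_cast hx
  have := D_odd k
  rw [h0] at this
  simp at this

lemma psi_deriv {k : ℕ} {x : Om} (hx : x ∈ R k) : (derivative (psi Om k)).eval x ≠ 0 := by
  induction k generalizing x with
  | zero => simp [psi]
  | succ k ih =>
    rw [psi, derivative_comp]
    rw [mem_R_succ] at hx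
    have h1 := ih hx
    have h2 := one_add_ne hx
    simp only [eval_mul, eval_comp]
    refine mul_ne_zero ?_ (by simpa [ph] using h1)
    intro h
    simp at h
    apply h2
    rw [ph]
    linear_combination (2 * x + 1) * h

lemma psi_natDegree (k : ℕ) : (psi Om k).natDegree = 2 ^ k := by
  induction k with
  | zero => simpa [psi] using natDegree_X_add_C (1 : Om)
  | succ k ih =>
    rw [psi, natDegree_comp, ih, pow_succ]
    congr 1
    compute_degree!

lemma psi_monic (k : ℕ) : (psi Om k).Monic := by
  induction k with
  | zero => simpa [psi] using monic_X_add_C (1 : Om)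
  | succ n ih =>
    rw [psi]
    refine ih.comp (by monicity!) ?_
    have : (X ^ 2 + X : Om[X]).natDegree = 2 := by compute_degree!
    rw [this]; decide

lemma psi_nodup (k : ℕ) : (psi Om k).roots.Nodup := by
  classical
  rw [Multiset.nodup_iff_count_le_one]
  intro x
  rw [count_roots]
  by_contra! h
  rw [one_lt_rootMultiplicity_iff_isRoot (psi_ne k)] at h
  refine psi_deriv (k := k) (x := x) ?_ h.2
  rw [R, Multiset.mem_toFinset, mem_roots (psi_ne k)]
  exact h.1

lemma card_R (k : ℕ) : (R k).card = 2 ^ k := by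
  classical
  rw [R, Multiset.toFinset_card_of_nodup (psi_nodup k), ← psi_natDegree k]
  exact (IsAlgClosed.splits (psi Om k)).natDegree_eq_card_roots.symm

lemma prod_R (k : ℕ) : ∏ x ∈ R k, (1 + 4 * x) = (((-1) ^ (2 ^ k) * D k : ℤ) : Om) := by
  classical
  have h := (IsAlgClosed.splits (psi Om k)).eq_prod_roots
  rw [(psi_monic k).leadingCoeff, C_1, one_mul] at h
  have h2 := psi_eval k (-1 / 4 : Om)
  rw [h, eval_multiset_prod, Multiset.map_map] at h2
  have h3 : ∏ x ∈ R k, (-1 / 4 - x) = ph^[k] (-1 / 4 : Om) + 1 := by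
    rw [← h2, Finset.prod, R, Multiset.toFinset_val, (psi_nodup k).dedup]
    congr 1
    apply Multiset.map_congr rfl
    simp
  push_cast
  rw [D_cast (by norm_num), ← h3, ← mul_assoc, ← mul_pow, ← card_R k, ← Finset.prod_const,
    ← Finset.prod_mul_distrib]
  apply Finset.prod_congr rfl
  intro x _
  ring

/-- The splitting field of `φ^{∘k} + 1`. -/
noncomputable def L (k : ℕ) : IntermediateField ℚ Om := IntermediateField.adjoin ℚ (R k : Set Om)

lemma mem_L {k : ℕ} {x : Om} (hx : x ∈ R k) : x ∈ L k :=
  IntermediateField.subset_adjoin _ _ hx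

instance (k : ℕ) : FiniteDimensional ℚ (L k) := by
  apply IntermediateField.finiteDimensional_adjoin
  intro x _
  exact Algebra.IsIntegral.isIntegral x

lemma R_eq (k : ℕ) : (R k : Set Om) = (psi ℚ k).rootSet Om := by
  ext x
  rw [Finset.mem_coe, mem_R, mem_rootSet, and_iff_right (psi_ne k), aeval_def, eval₂_eq_eval_map,
    psi_map, psi_eval, eq_neg_iff_add_eq_zero]

instance (k : ℕ) : Normal ℚ (L k) := by
  have h := IntermediateField.adjoin_rootSet_isSplittingField (K := ℚ) (L := Om) (p := psi ℚ k)
    (IsAlgClosed.splits _)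
  rw [← R_eq] at h
  exact Normal.of_isSplittingField (hFEp := h) (psi ℚ k)

lemma nonsq (k : ℕ) (t : L k) : (t : Om) ^ 2 ≠ ∏ x ∈ R k, (1 + 4 * x) := by
  intro ht
  obtain ⟨p, m, u, hp, hp2, hm, hu, hD⟩ := exists_prime k
  have : Fact p.Prime := ⟨hp⟩
  let κ := AlgebraicClosure (ZMod p)
  have h4 : (4 : κ) ≠ 0 := four_ne p hp2
  have hDk : (D k : κ) = 0 := by
    rw [hD]; push_cast
    rw [CharP.cast_eq_zero, zero_pow hm.pos.ne', zero_mul]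
  have hs := witt_split (k := κ) p hp2 k (fun j hj => D_coprime h4 hj hDk)
  let E := FractionRing (WittVector p κ)
  have : CharZero (WittVector p κ) := by
    refine charZero_of_inj_zero ?_
    intro n
    induction n using Nat.strong_induction_on with
    | _ n ih =>
      intro hn
      have h0 : (n : κ) = 0 := by
        have := congrArg WittVector.constantCoeff hn
        rwa [map_natCast, map_zero] at this
      rw [CharP.cast_eq_zero_iff κ p] at h0
      obtain ⟨m, rfl⟩ := h0
      push_cast at hn
      rcases mul_eq_zero.mp hn with h | h
      · exact absurd h (WittVector.irreducible p).ne_zero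
      · by_cases hm0 : m = 0
        · simp [hm0]
        · have := ih m (by nlinarith [hp.two_le, Nat.pos_of_ne_zero hm0]) h
          exact absurd this hm0
  have : CharZero E := IsFractionRing.charZero (WittVector p κ)
  have hs' : (psi E k).Splits := by
    rw [← psi_map (algebraMap (WittVector p κ) E)]
    exact hs.map _
  obtain ⟨g⟩ : Nonempty (L k →ₐ[ℚ] E) := by
    apply IntermediateField.nonempty_algHom_adjoin_of_splits
    intro s hsR
    refine ⟨Algebra.IsIntegral.isIntegral s, ?_⟩
    refine Splits.of_dvd (g := psi E k) hs' (psi_ne k) ?_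
    rw [← psi_map (algebraMap ℚ E)]
    apply Polynomial.map_dvd
    apply minpoly.dvd
    rw [aeval_def, eval₂_eq_eval_map, psi_map, psi_eval, mem_R.mp hsR]
    simp
  rw [prod_R, hD] at ht
  have ht' : t ^ 2 = (((-1) ^ (2 ^ k) * (p ^ m * u) : ℤ) : L k) := by
    apply Subtype.ext
    push_cast at ht ⊢
    exact ht
  have := congrArg g ht'
  rw [map_pow, map_intCast] at this
  refine witt_nonsq (k := κ) p m hm ((-1) ^ (2 ^ k) * u) ?_ (g t) ?_
  · rcases neg_one_pow_eq_or ℤ (2 ^ k) with h | h <;> rw [h] <;> simpa using hu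
  · rw [this]; congr 1; ring


lemma exists_r (x : Om) : ∃ y : Om, y ^ 2 = 1 + 4 * x := IsAlgClosed.exists_pow_nat_eq _ (by norm_num)

/-- A square root of `1 + 4 x`. -/
noncomputable def r (x : Om) : Om := (exists_r x).choose

lemma r_sq (x : Om) : r x ^ 2 = 1 + 4 * x := (exists_r x).choose_spec

lemma r_ne {k : ℕ} {x : Om} (hx : x ∈ R k) : r x ≠ 0 := by
  intro h
  apply one_add_ne hx
  rw [← r_sq, h]; simp

/-- Sign attached to an element of `ZMod 2`. -/
def sg (a : ZMod 2) : ℤ := if a = 0 then 1 else -1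

lemma sg_add (a b : ZMod 2) : sg (a + b) = sg a * sg b := by
  revert a b; decide

lemma sg_sum {ι : Type*} (s : Finset ι) (v : ι → ZMod 2) :
    sg (∑ i ∈ s, v i) = ∏ i ∈ s, sg (v i) := by
  classical
  induction s using Finset.induction_on with
  | empty => simp [sg]
  | insert a s ha ih => rw [Finset.sum_insert ha, Finset.prod_insert ha, sg_add, ih]

lemma ph_sq (z : Om) : (2 * z + 1) ^ 2 = 1 + 4 * ph z := by rw [ph]; ring

/-- Subspace of realised sign vectors. -/
noncomputable def H (k : ℕ) : Submodule (ZMod 2) (R k → ZMod 2) where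
  carrier := {v | ∃ τ : Om ≃ₐ[L k] Om, ∀ x : R k, τ (r x) = (sg (v x) : Om) * r x}
  zero_mem' := ⟨1, fun x => by simp [sg]⟩
  add_mem' := by
    rintro v w ⟨σ, hσ⟩ ⟨τ, hτ⟩
    refine ⟨σ * τ, fun x => ?_⟩
    rw [AlgEquiv.mul_apply, hτ, map_mul, map_intCast, hσ, Pi.add_apply, sg_add]
    push_cast
    ring
  smul_mem' := by
    rintro c v ⟨σ, hσ⟩
    have hc : c = 0 ∨ c = 1 := by revert c; decide
    rcases hc with rfl | rfl
    · exact ⟨1, fun x => by simp [sg]⟩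
    · exact ⟨σ, fun x => by simpa using hσ x⟩

instance (k : ℕ) : IsAlgClosure (L k) Om :=
  ⟨inferInstance, Algebra.IsAlgebraic.tower_top (K := ℚ) (L k)⟩

instance (k : ℕ) : Normal (L k) Om := IsAlgClosure.normal (L k) Om

instance : IsAlgClosure ℚ Om := ⟨inferInstance, inferInstance⟩

instance : Normal ℚ Om := IsAlgClosure.normal ℚ Om

instance (k : ℕ) : IsGalois (L k) Om where

/-- The inductive hypothesis. -/
def Good (k : ℕ) : Prop :=
  Module.finrank ℚ (L k) = 2 ^ (2 ^ k - 1) ∧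
    ∀ x ∈ R k, ∀ y ∈ R k, ∃ σ : Om ≃ₐ[ℚ] Om, σ x = y

lemma coe_aff {k : ℕ} (x : L k) : ((1 + 4 * x : L k) : Om) = 1 + 4 * (x : Om) := by
  rfl

lemma full {k : ℕ} (hk : Good k) (v : R k → ZMod 2) :
    ∃ τ : Om ≃ₐ[L k] Om, ∀ x : R k, τ (r x) = (sg (v x) : Om) * r x := by
  classical
  suffices h : H k = ⊤ by
    have : v ∈ H k := by rw [h]; trivial
    exact this
  by_contra hne
  obtain ⟨f, hf0, hf⟩ := Submodule.exists_le_ker_of_lt_top (H k) (lt_top_iff_ne_top.mpr hne)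
  let T : Finset (R k) := Finset.univ.filter fun i => f (Pi.single i 1) ≠ 0
  have hfT : ∀ v, f v = ∑ i ∈ T, v i := by
    intro v
    rw [LinearMap.pi_apply_eq_sum_univ f v, Finset.sum_filter]
    apply Finset.sum_congr rfl
    intro i _
    have e : (fun j => if i = j then (1 : ZMod 2) else 0) = Pi.single i 1 := by
      funext j
      simp [Pi.single_apply, eq_comm]
    rw [e, smul_eq_mul]
    generalize f (Pi.single i 1) = c
    have hc : c = 0 ∨ c = 1 := by revert c; decide
    rcases hc with rfl | rfl <;> simp
  have hTne : T.Nonempty := by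
    rw [Finset.nonempty_iff_ne_empty]
    intro hT
    apply hf0
    refine LinearMap.ext fun v => ?_
    simp [hfT, hT]
  -- the product of the roots over `T` lies in `L k`
  have hfix : (∏ i ∈ T, r (i : Om)) ∈ Set.range (algebraMap (L k) Om) := by
    rw [InfiniteGalois.mem_range_algebraMap_iff_fixed]
    intro τ
    let w : R k → ZMod 2 := fun x => if τ (r x) = r x then 0 else 1
    have hw : ∀ x : R k, τ (r x) = (sg (w x) : Om) * r x := by
      intro x
      by_cases hx : τ (r x) = r x
      · simp [w, hx, sg]
      · have hsq : τ (r x) ^ 2 = r x ^ 2 := by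
          rw [← map_pow, r_sq]
          have := τ.commutes ⟨x, mem_L x.2⟩
          have h2 : τ (x : Om) = x := this
          rw [map_add, map_mul, h2, map_one, map_ofNat τ 4]
        rcases sq_eq_sq_iff_eq_or_eq_neg.mp hsq with h | h
        · exact absurd h hx
        · rw [h] at hx
          simp [w, h, hx, sg]
    have hker : f w = 0 := hf (show w ∈ H k from ⟨τ, hw⟩)
    rw [hfT] at hker
    rw [map_prod, Finset.prod_congr rfl (fun x _ => hw x), Finset.prod_mul_distrib,
      ← Int.cast_prod, ← sg_sum, hker]
    simp [sg]
  obtain ⟨t, ht⟩ := hfix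
  let inc : R k ↪ L k := ⟨fun x => ⟨x, mem_L x.2⟩, fun a b h => by
    apply Subtype.ext
    exact congrArg (Subtype.val : L k → Om) h⟩
  have hinc : ∀ y : L k, y ∈ Finset.univ.map inc ↔ (y : Om) ∈ R k := by
    intro y
    constructor
    · intro h
      obtain ⟨x, -, rfl⟩ := Finset.mem_map.mp h
      exact x.2
    · intro h
      exact Finset.mem_map.mpr ⟨⟨y, h⟩, Finset.mem_univ _, rfl⟩
  have hG : IsPGroup 2 (L k ≃ₐ[ℚ] L k) := by
    apply IsPGroup.of_card (n := 2 ^ k - 1)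
    rw [← hk.1]
    have : IsGalois ℚ (L k) := { }
    exact IsGalois.card_aut_eq_finrank ℚ (L k)
  have key := fixed_full hG (Finset.univ.map inc)
    (by
      intro g x hx
      rw [hinc, mem_R] at hx ⊢
      have h1 : ph^[k] x = -1 := Subtype.ext (by
        have := map_ph_iter (algebraMap (L k) Om) k x
        exact this.trans hx)
      have h2 := map_ph_iter (g : L k →+* L k) k x
      rw [h1] at h2
      have h3 := map_ph_iter (algebraMap (L k) Om) k (g x)
      refine h3.symm.trans ?_
      have h4 : ph^[k] (g x) = -1 := h2.symm.trans (by simp)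
      rw [h4]
      simp)
    (by
      intro x hx y hy
      rw [hinc] at hx hy
      obtain ⟨σ, hσ⟩ := hk.2 x hx y hy
      refine ⟨σ.restrictNormal (L k), ?_⟩
      apply Subtype.ext
      have := AlgEquiv.restrictNormal_commutes σ (L k) x
      exact this.trans hσ)
    (fun x => 1 + 4 * x)
    (by
      intro g x
      change 1 + 4 * g x = g (1 + 4 * x)
      rw [map_add, map_mul, map_one, map_ofNat g 4])
    (by
      intro x hx h
      rw [hinc] at hx
      apply one_add_ne hx
      have := congrArg Subtype.val h
      rwa [coe_aff] at this)
    (T.map inc) (Finset.map_subset_map.mpr (Finset.subset_univ _)) (hTne.map)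
    (by
      refine ⟨t, ?_⟩
      apply Subtype.ext
      rw [Finset.prod_map]
      have e : ((∏ x ∈ T, (1 + 4 * inc x) : L k) : Om) = ∏ x ∈ T, (1 + 4 * (x : Om)) := by
        rw [← IntermediateField.algebraMap_apply, map_prod]
        apply Finset.prod_congr rfl
        intro x _
        exact coe_aff (inc x)
      rw [e]
      have ht' : (t : Om) = ∏ i ∈ T, r (i : Om) := ht
      push_cast
      rw [ht', ← Finset.prod_mul_distrib]
      apply Finset.prod_congr rfl
      intro x _
      rw [← r_sq]; ring)
  obtain ⟨s, hs⟩ := key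
  apply nonsq k s
  rw [Finset.prod_map] at hs
  have := congrArg (algebraMap (L k) Om) hs
  rw [map_prod, map_mul] at this
  rw [← Finset.prod_coe_sort]
  refine (sq (s : Om)).trans (this.symm.trans ?_)
  apply Finset.prod_congr rfl
  intro x _
  exact coe_aff (inc x)

lemma half_mem {k : ℕ} {x : Om} (hx : x ∈ R k) : (r x - 1) / 2 ∈ R (k + 1) := by
  rw [mem_R_succ]
  have : ph ((r x - 1) / 2) = x := by
    have := r_sq x
    rw [ph]
    linear_combination this / 4
  rwa [this]

lemma ph_mem {K : IntermediateField ℚ Om} {z : Om} (hz : z ∈ K) : ph z ∈ K :=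
  add_mem (pow_mem hz 2) hz

lemma ofNat_mem (K : IntermediateField ℚ Om) (n : ℕ) : (n : Om) ∈ K := natCast_mem K n

lemma R_sub {k : ℕ} {x : Om} (hx : x ∈ R k) : x ∈ L (k + 1) := by
  have h := ph_mem (mem_L (half_mem hx))
  have e : ph ((r x - 1) / 2) = x := by
    have := r_sq x
    rw [ph]
    linear_combination this / 4
  rwa [e] at h

lemma L_le (k : ℕ) : L k ≤ L (k + 1) := by
  rw [L, IntermediateField.adjoin_le_iff]
  exact fun x hx => R_sub hx

/-- `L (k+1)` as an extension of `L k`. -/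
noncomputable def M (k : ℕ) : IntermediateField (L k) Om :=
  IntermediateField.adjoin (L k) (Set.image r (R k : Set Om))

lemma M_eq (k : ℕ) : (M k).restrictScalars ℚ = L (k + 1) := by
  apply le_antisymm
  · have h1 : M k ≤ IntermediateField.extendScalars (L_le k) := by
      rw [M, IntermediateField.adjoin_le_iff]
      rintro _ ⟨x, hx, rfl⟩
      change r x ∈ L (k + 1)
      have h := mem_L (half_mem hx)
      have e : r x = (2 : ℕ) * ((r x - 1) / 2) + (1 : ℕ) := by push_cast; ring
      rw [e]
      exact add_mem (mul_mem (ofNat_mem _ _) h) (ofNat_mem _ _)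
    intro z hz
    exact h1 hz
  · rw [L, IntermediateField.adjoin_le_iff]
    intro z hz
    change z ∈ M k
    have hx : ph z ∈ R k := mem_R_succ.mp hz
    have h1 : r (ph z) ∈ M k := IntermediateField.subset_adjoin _ _ ⟨_, hx, rfl⟩
    have h2 : 2 * z + 1 ∈ M k := by
      have : (2 * z + 1) ^ 2 = r (ph z) ^ 2 := by rw [r_sq, ph_sq]
      rcases sq_eq_sq_iff_eq_or_eq_neg.mp this with h | h
      · rwa [h]
      · rw [h]; exact neg_mem h1
    have e : z = ((2 * z + 1) - (1 : ℕ)) / (2 : ℕ) := by push_cast; ring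
    rw [e]
    exact div_mem (sub_mem h2 (natCast_mem (M k) 1)) (natCast_mem (M k) 2)

instance (k : ℕ) : FiniteDimensional (L k) (M k) := by
  apply IntermediateField.finiteDimensional_adjoin
  intro x _
  exact Algebra.IsIntegral.isIntegral x

lemma finrank_M {k : ℕ} (hk : Good k) : Module.finrank (L k) (M k) = 2 ^ (2 ^ k) := by
  classical
  rw [← AlgHom.card (L k) (M k) Om, ← Nat.card_eq_fintype_card]
  have hcard : Nat.card (R k → ZMod 2) = 2 ^ (2 ^ k) := by
    simp [card_R]
  rw [← hcard]
  choose τ hτ using full hk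
  have hrm : ∀ x : R k, r x ∈ M k := fun x => IntermediateField.subset_adjoin _ _ ⟨x, x.2, rfl⟩
  symm
  apply Nat.card_eq_of_bijective (fun v => ((τ v : Om →ₐ[L k] Om).comp (M k).val))
  constructor
  · intro v w h
    funext x
    have h1 : τ v (r x) = τ w (r x) := DFunLike.congr_fun h ⟨r x, hrm x⟩
    rw [hτ, hτ] at h1
    have h2 := mul_right_cancel₀ (r_ne x.2) h1
    have h3 : sg (v x) = sg (w x) := by exact_mod_cast h2
    revert h3
    generalize v x = a
    generalize w x = b
    revert a b
    decide
  · intro f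
    let w : R k → ZMod 2 := fun x => if f ⟨r x, hrm x⟩ = r x then 0 else 1
    have hw : ∀ x : R k, f ⟨r x, hrm x⟩ = (sg (w x) : Om) * r x := by
      intro x
      by_cases hx : f ⟨r x, hrm x⟩ = r x
      · simp [w, hx, sg]
      · have hsq : f ⟨r x, hrm x⟩ ^ 2 = r x ^ 2 := by
          rw [← map_pow, r_sq]
          have e : (⟨r x, hrm x⟩ : M k) ^ 2 = algebraMap (L k) (M k) (1 + 4 * ⟨x, mem_L x.2⟩) := by
            apply Subtype.ext
            refine (r_sq x).trans ?_
            change _ = ((1 + 4 * ⟨x, mem_L x.2⟩ : L k) : Om)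
            push_cast
            rfl
          rw [e, f.commutes]
          change ((1 + 4 * ⟨x, mem_L x.2⟩ : L k) : Om) = _
          push_cast
          rfl
        rcases sq_eq_sq_iff_eq_or_eq_neg.mp hsq with h | h
        · exact absurd h hx
        · rw [h] at hx
          simp [w, h, hx, sg]
    refine ⟨w, ?_⟩
    apply IntermediateField.algHom_ext_of_eq_adjoin (L k) (S := M k) (s := Set.image r (R k : Set Om)) rfl
    rintro _ ⟨x, hx, rfl⟩
    change τ w (r x) = _
    rw [hτ w ⟨x, hx⟩]
    exact (hw ⟨x, hx⟩).symm

lemma good (k : ℕ) : Good k := by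
  induction k with
  | zero =>
    have h0 : ∀ x, x ∈ R 0 ↔ x = -1 := fun x => by simp [mem_R]
    refine ⟨?_, ?_⟩
    · have : L 0 = ⊥ := by
        rw [eq_bot_iff, L, IntermediateField.adjoin_le_iff]
        intro x hx
        rw [Finset.mem_coe, h0] at hx
        rw [hx]
        exact neg_mem (one_mem _)
      rw [this]
      simp
    · intro x hx y hy
      rw [h0] at hx hy
      exact ⟨1, by simp [hx, hy]⟩
  | succ k hk =>
    refine ⟨?_, ?_⟩
    · have h1 : Module.finrank ℚ (L (k + 1)) = Module.finrank ℚ (M k) := by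
        rw [← M_eq]; rfl
      rw [h1, ← Module.finrank_mul_finrank ℚ (L k) (M k), hk.1, finrank_M hk, ← pow_add]
      congr 1
      have : 1 ≤ 2 ^ k := Nat.one_le_two_pow
      rw [pow_succ]
      omega
    · intro z hz z' hz'
      have hx' := mem_R_succ.mp hz'
      obtain ⟨σ, hσ⟩ := hk.2 _ (mem_R_succ.mp hz) _ hx'
      have h1 : (2 * σ z + 1) ^ 2 = (2 * z' + 1) ^ 2 := by
        rw [ph_sq z', ← hσ, ph]
        simp
        ring
      rcases sq_eq_sq_iff_eq_or_eq_neg.mp h1 with h | h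
      · exact ⟨σ, by linear_combination h / 2⟩
      · obtain ⟨τ, hτ⟩ := full hk (fun _ => 1)
        have h2 := hτ ⟨_, hx'⟩
        have h3 : ((sg 1 : ℤ) : Om) = -1 := by simp [sg]
        rw [h3] at h2
        simp only at h2
        have h4 : τ (2 * z' + 1) = - (2 * z' + 1) := by
          have : (2 * z' + 1) ^ 2 = r (ph z') ^ 2 := by rw [r_sq, ph_sq]
          rcases sq_eq_sq_iff_eq_or_eq_neg.mp this with h | h
          · rw [h, h2]; ring
          · rw [h, map_neg, h2]; ring
        have h5 : τ (2 * σ z + 1) = 2 * z' + 1 := by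
          rw [h, map_neg, h4]; ring
        refine ⟨σ.trans (τ.restrictScalars ℚ), ?_⟩
        change τ (σ z) = z'
        rw [map_add, map_mul, map_one, map_ofNat] at h5
        linear_combination h5 / 2

lemma iter_zero_mem (m : ℕ) (x : Om) (hx : ph^[m + 1] x = 0) : x ∈ L m := by
  induction m with
  | zero =>
    have h : x ^ 2 + x = 0 := hx
    have h' : x * (x + 1) = 0 := by linear_combination h
    rcases mul_eq_zero.mp h' with h | h
    · rw [h]; exact zero_mem _
    · rw [eq_neg_of_add_eq_zero_left h]; exact neg_mem (one_mem _)
  | succ m ih =>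
    rw [Function.iterate_succ_apply'] at hx
    have h' : ph^[m + 1] x * (ph^[m + 1] x + 1) = 0 := by
      rw [ph] at hx
      linear_combination hx
    rcases mul_eq_zero.mp h' with h | h
    · exact L_le m (ih h)
    · exact mem_L (mem_R.mpr (eq_neg_of_add_eq_zero_left h))

lemma iterComp_aeval (n : ℕ) (S : Type*) [CommRing S] [Algebra ℚ S] (x : S) :
    aeval x (iterComp (X ^ 2 + X) n) = ph^[n] x := by
  induction n with
  | zero => simp [iterComp]
  | succ n ih =>
    rw [iterComp, aeval_comp, ih, Function.iterate_succ_apply']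
    simp [ph]

lemma iterComp_ne (n : ℕ) : iterComp (X ^ 2 + X) n ≠ 0 := by
  intro h
  have h1 := iterComp_aeval n ℚ 1
  rw [h, map_zero] at h1
  have : ∀ n, 0 < ph^[n] (1 : ℚ) := by
    intro n
    induction n with
    | zero => simp
    | succ n ih =>
      rw [Function.iterate_succ_apply', ph]
      positivity
  exact (this n).ne h1

lemma split_eq (m : ℕ) : splitFld (iterComp (X ^ 2 + X) (m + 1)) = L m := by
  apply le_antisymm
  · rw [splitFld, IntermediateField.adjoin_le_iff]
    intro x hx
    rw [mem_rootSet, iterComp_aeval] at hx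
    exact iter_zero_mem m x hx.2
  · rw [L, splitFld]
    apply IntermediateField.adjoin.mono
    intro x hx
    rw [mem_rootSet, iterComp_aeval]
    refine ⟨iterComp_ne _, ?_⟩
    rw [Function.iterate_succ_apply', mem_R.mp hx]
    simp [ph]

end Stmt19

/-- with `φ(X) = X² + X`, for every `n ≥ 1` the splitting field `K_n` of
`φ^{∘n}` over `ℚ` satisfies `[K_n : ℚ] = 2^(2^(n−1) − 1)`, the maximal possible order,
equal to the order of the automorphism group of the complete binary tree of height `n−1`. -/
theorem stmt_19 (n : ℕ) (hn : 1 ≤ n) :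
    Module.finrank ℚ ↥(splitFld (iterComp (X ^ 2 + X) n)) = 2 ^ (2 ^ (n - 1) - 1) := by
  obtain ⟨m, rfl⟩ : ∃ m, n = m + 1 := ⟨n - 1, by omega⟩
  rw [Stmt19.split_eq, (Stmt19.good m).1]
  simp
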